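/- Let τ be a nonnegative integer and let n be a positive integer. Let x, x̃ ∈ ℤⁿ be two integer vectors, set r = x − x̃ (componentwise), let r̂ be obtained by applying the uniform quantizer Q_τ componentwise to r, and set x̂ = x̃ + r̂. Then the ℓ∞ reconstruction error satisfies max_{1≤i≤n} |x_i − x̂_i| ≤ τ; that is, the near-lossless reconstruction x̂ obeys the tight per-pixel error bound ‖x − x̂‖_∞ ≤ τ. -/

import Mathlib

/-- The uniform quantizer `Q_τ(x) = sgn(x)·(2τ+1)·⌊(|x|+τ)/(2τ+1)⌋`. -/
def uniformQuantizer (τ : ℕ) (x : ℤ) : ℤ :=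
  x.sign * ((2 * (τ : ℤ) + 1) * ((|x| + (τ : ℤ)) / (2 * (τ : ℤ) + 1)))

/-! Rounding an integer to the nearest multiple of the odd number `2τ + 1` moves it by at most `τ`.
The quantizer does this to `|x|` and restores the sign, which does not change the error. The
reconstruction error at a pixel is exactly the quantization error of the prediction residual. -/

theorem abs_sub_mul_add_ediv_two_mul_add_one_le {τ : ℤ} (hτ : 0 ≤ τ) (a : ℤ) :
    |a - (2 * τ + 1) * ((a + τ) / (2 * τ + 1))| ≤ τ := by
  have error_eq : a - (2 * τ + 1) * ((a + τ) / (2 * τ + 1)) = (a + τ) % (2 * τ + 1) - τ := by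
    rw [Int.emod_def]
    ring
  have emod_nonneg : 0 ≤ (a + τ) % (2 * τ + 1) := Int.emod_nonneg _ (by lia)
  have emod_lt : (a + τ) % (2 * τ + 1) < 2 * τ + 1 := Int.emod_lt_of_pos _ (by lia)
  rw [error_eq, abs_le]
  constructor <;> lia

theorem sub_uniformQuantizer (τ : ℕ) (x : ℤ) :
    x - uniformQuantizer τ x =
      x.sign * (|x| - (2 * (τ : ℤ) + 1) * ((|x| + (τ : ℤ)) / (2 * (τ : ℤ) + 1))) := by
  rw [uniformQuantizer, mul_sub, Int.sign_mul_abs]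

theorem abs_sub_uniformQuantizer_le (τ : ℕ) (x : ℤ) : |x - uniformQuantizer τ x| ≤ τ := by
  have abs_sign_le_one : |x.sign| ≤ 1 := by
    rcases Int.sign_trichotomy x with h | h | h <;> simp [h]
  rw [sub_uniformQuantizer, abs_mul]
  exact (mul_le_of_le_one_left (abs_nonneg _) abs_sign_le_one).trans
    (abs_sub_mul_add_ediv_two_mul_add_one_le τ.cast_nonneg |x|)

/-- Near-lossless reconstruction error bound: if `r = x − x̃`, `r̂` is the
componentwise uniform quantization of `r`, and `x̂ = x̃ + r̂`, then
`‖x − x̂‖_∞ = max_i |x_i − x̂_i| ≤ τ`. -/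
theorem nearLossless_linf_bound (τ n : ℕ) (hn : 0 < n)
    (x xt r rhat xhat : Fin n → ℤ)
    (hr : r = x - xt)
    (hrhat : ∀ i : Fin n, rhat i = uniformQuantizer τ (r i))
    (hxhat : xhat = xt + rhat) :
    Finset.univ.sup' (Finset.univ_nonempty_iff.mpr ⟨⟨0, hn⟩⟩)
      (fun i : Fin n => |x i - xhat i|) ≤ (τ : ℤ) := by
  refine Finset.sup'_le _ _ fun i _ => ?_
  calc |x i - xhat i| = |r i - uniformQuantizer τ (r i)| := by
        rw [hxhat, Pi.add_apply, hrhat, ← sub_sub, hr, Pi.sub_apply]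
    _ ≤ τ := abs_sub_uniformQuantizer_le τ (r i)
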